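/- For every nonnegative integer m, the difference of odd-order logarithmic derivatives (d^{2m+1}/ds^{2m+1})[log|ζ(s)| − log β(s)] at s = 1/2 equals (1/2)·π^{2m+1}·|E_{2m}| + δ_{m,0}·log 2, where δ_{m,0} is 1 if m = 0 and 0 otherwise. -/

import Mathlib

/-- The Dirichlet beta function `β(s) = L(χ₄, s)`, as an entire continuation,
expressed via Hurwitz zeta: `β(s) = 4^{-s} (ζ(s,1/4) - ζ(s,3/4))`. -/
noncomputable def dirichletBeta (s : ℂ) : ℂ :=
  4 ^ (-s) * (HurwitzZeta.hurwitzZeta ((1/4 : ℝ) : UnitAddCircle) s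
    - HurwitzZeta.hurwitzZeta ((3/4 : ℝ) : UnitAddCircle) s)

/-- Euler numbers `E_n` (`E_0 = 1`, `E_2 = -1`, `E_4 = 5`, `E_{odd} = 0`). -/
def eulerNumber : ℕ → ℚ
  | 0 => 1
  | n + 1 => -(1/2) * ∑ k : Fin (n + 1),
      ((n + 1).choose k * (1 + (-1 : ℚ) ^ (n + 1 - (k : ℕ)) : ℚ) * eulerNumber k)

/-!
For `0 < x < 1` the functional equations of `ζ` and `β` carry the same Gamma factor, so it cancels
in their quotient: with `F = log |ζ| - log |β|`,
`F x - F (1 - x) = x log 4 - log 2 + log (tan (π x / 2))`,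
whose derivative is `log 4 + π sec (π (x - 1 / 2))`. At the centre `1 / 2` of the reflection, odd
derivatives of the left side are twice those of `F`, and the derivatives of even
order of `sec` at `0` are `|E_{2m}|`: they solve the recurrence of the Euler numbers up to powers of
`i`, and they are nonnegative because `sec' = sec * tan` and `tan' = 1 + tan ^ 2`.

All logarithms are genuine because `ζ` and `β` do not vanish at positive reals: for `0 < a < b ≤ 1`
the series `∑ ((n + a) ^ (-s) - (n + b) ^ (-s))` of `ζ(s, a) - ζ(s, b)` converges for `0 < re s`
and has positive terms for real `s`. The case `(a, b) = (1 / 4, 3 / 4)` gives `4 ^ s * β(s)`, and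
`(a, b) = (1 / 2, 1)` gives `(2 ^ s - 2) * ζ(s)`.
-/

section HurwitzZeta

open Complex HurwitzZeta Set

theorem norm_ofReal_cpow_sub_ofReal_cpow_le {δ x y : ℝ} (hδ : 0 < δ) (hx : δ ≤ x) (hy : δ ≤ y)
    {c : ℂ} (hc : c.re ≤ 1) :
    ‖(x : ℂ) ^ c - (y : ℂ) ^ c‖ ≤ ‖c‖ * δ ^ (c.re - 1) * |x - y| := by
  have hderiv : ∀ t ∈ Ici δ,
      HasDerivWithinAt (fun t : ℝ ↦ (t : ℂ) ^ c) (c * (t : ℂ) ^ (c - 1)) (Ici δ) t := by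
    intro t ht
    have h := (hasDerivAt_id (t : ℂ)).cpow_const (c := c)
      (Or.inl (by simpa using hδ.trans_le ht))
    simpa using h.comp_ofReal.hasDerivWithinAt
  have hbound : ∀ t ∈ Ici δ, ‖c * (t : ℂ) ^ (c - 1)‖ ≤ ‖c‖ * δ ^ (c.re - 1) := by
    intro t ht
    rw [norm_mul, norm_cpow_eq_rpow_re_of_pos (hδ.trans_le ht), sub_re, one_re]
    exact mul_le_mul_of_nonneg_left (Real.rpow_le_rpow_of_nonpos hδ ht (by linarith))
      (norm_nonneg c)
  exact (convex_Ici δ).norm_image_sub_le_of_norm_hasDerivWithin_le hderiv hbound hy hx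

variable {a b : ℝ}

theorem norm_natCast_add_cpow_neg_sub_le (ha : a ∈ Ioc 0 1) (hb : b ∈ Ioc 0 1) {ε R : ℝ}
    (hε : 0 ≤ ε) {s : ℂ} (hεs : ε ≤ s.re) (hsR : ‖s‖ ≤ R) (n : ℕ) :
    ‖(n + a : ℂ) ^ (-s) - (n + b : ℂ) ^ (-s)‖ ≤
      R * min a b ^ (-R - 1) * ((n : ℝ) + 1) ^ (-ε - 1) := by
  have hmin : 0 < min a b := lt_min ha.1 hb.1
  have hmin_one : min a b ≤ 1 := min_le_of_left_le ha.2
  have hsre : s.re ≤ R := (re_le_norm s).trans hsR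
  have hle : ∀ x, min a b ≤ x → min a b * (n + 1) ≤ n + x := fun x hx ↦ by nlinarith
  have hdist : |(n + a) - (n + b)| ≤ 1 := by
    rw [abs_le]; constructor <;> linarith [ha.1, ha.2, hb.1, hb.2]
  calc ‖(n + a : ℂ) ^ (-s) - (n + b : ℂ) ^ (-s)‖
      ≤ ‖s‖ * (min a b * (n + 1)) ^ (-s.re - 1) * |(n + a) - (n + b)| := by
        simpa using norm_ofReal_cpow_sub_ofReal_cpow_le (by positivity)
          (hle a (min_le_left a b)) (hle b (min_le_right a b))
          (show (-s).re ≤ 1 by rw [neg_re]; linarith)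
    _ ≤ R * (min a b ^ (-R - 1) * ((n : ℝ) + 1) ^ (-ε - 1)) * 1 := by
        rw [Real.mul_rpow hmin.le (by positivity)]
        have h₁ : min a b ^ (-s.re - 1) ≤ min a b ^ (-R - 1) :=
          Real.rpow_le_rpow_of_exponent_ge hmin hmin_one (by linarith)
        have h₂ : ((n : ℝ) + 1) ^ (-s.re - 1) ≤ ((n : ℝ) + 1) ^ (-ε - 1) :=
          Real.rpow_le_rpow_of_exponent_le (by simp) (by linarith)
        have hR : 0 ≤ R := (norm_nonneg s).trans hsR
        gcongr
    _ = R * min a b ^ (-R - 1) * ((n : ℝ) + 1) ^ (-ε - 1) := by ring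

theorem summable_mul_natCast_add_one_rpow {ε : ℝ} (hε : 0 < ε) (C : ℝ) :
    Summable fun n : ℕ ↦ C * ((n : ℝ) + 1) ^ (-ε - 1) := by
  have h := (summable_nat_add_iff 1).2 (Real.summable_nat_rpow.2 (show -ε - 1 < -1 by linarith))
  exact (by simpa using h : Summable fun n : ℕ ↦ ((n : ℝ) + 1) ^ (-ε - 1)).mul_left C

theorem summable_natCast_add_cpow_neg_sub (ha : a ∈ Ioc 0 1) (hb : b ∈ Ioc 0 1) {s : ℂ}
    (hs : 0 < s.re) : Summable fun n : ℕ ↦ (n + a : ℂ) ^ (-s) - (n + b : ℂ) ^ (-s) :=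
  Summable.of_norm_bounded (summable_mul_natCast_add_one_rpow hs _)
    (norm_natCast_add_cpow_neg_sub_le ha hb hs.le le_rfl le_rfl)

theorem differentiableOn_tsum_natCast_add_cpow_neg_sub (ha : a ∈ Ioc 0 1) (hb : b ∈ Ioc 0 1) :
    DifferentiableOn ℂ (fun s : ℂ ↦ ∑' n : ℕ, ((n + a : ℂ) ^ (-s) - (n + b : ℂ) ^ (-s)))
      {s | 0 < s.re} := by
  intro s (hs : 0 < s.re)
  let U : Set ℂ := {z | s.re / 2 < z.re} ∩ Metric.ball 0 (‖s‖ + 1)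
  have hU : IsOpen U := (isOpen_lt continuous_const continuous_re).inter Metric.isOpen_ball
  have hsU : s ∈ U := ⟨half_lt_self hs, by simp⟩
  have hne : ∀ {x : ℝ}, 0 < x → ∀ n : ℕ, (n + x : ℂ) ≠ 0 := fun {x} hx n ↦ by
    exact_mod_cast (by positivity : (n + x : ℝ) ≠ 0)
  have hterm (n : ℕ) : DifferentiableOn ℂ (fun z ↦ (n + a : ℂ) ^ (-z) - (n + b : ℂ) ^ (-z)) U :=
    fun z _ ↦ ((differentiableAt_id.neg.const_cpow (Or.inl (hne ha.1 n))).sub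
      (differentiableAt_id.neg.const_cpow (Or.inl (hne hb.1 n)))).differentiableWithinAt
  have hdiff := differentiableOn_tsum_of_summable_norm
    (summable_mul_natCast_add_one_rpow (half_pos hs) _) hterm hU fun n z hz ↦
      norm_natCast_add_cpow_neg_sub_le ha hb (half_pos hs).le hz.1.le
        (mem_ball_zero_iff.1 hz.2).le n
  exact (hdiff.differentiableAt (hU.mem_nhds hsU)).differentiableWithinAt

theorem hasSum_hurwitzZeta_sub_hurwitzZeta (ha : a ∈ Ioc 0 1) (hb : b ∈ Ioc 0 1) {s : ℂ}
    (hs : 0 < s.re) :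
    HasSum (fun n : ℕ ↦ (n + a : ℂ) ^ (-s) - (n + b : ℂ) ^ (-s))
      (hurwitzZeta (a : UnitAddCircle) s - hurwitzZeta (b : UnitAddCircle) s) := by
  have hopen (x : ℝ) : IsOpen {z : ℂ | x < z.re} := isOpen_lt continuous_const continuous_re
  have hseries := (differentiableOn_tsum_natCast_add_cpow_neg_sub ha hb).analyticOnNhd (hopen 0)
  have hzeta := (differentiable_hurwitzZeta_sub_hurwitzZeta
    (a : UnitAddCircle) (b : UnitAddCircle)).differentiableOn.analyticOnNhd (hopen 0)
  have heq : (fun z ↦ ∑' n : ℕ, ((n + a : ℂ) ^ (-z) - (n + b : ℂ) ^ (-z))) =ᶠ[nhds 2]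
      fun z ↦ hurwitzZeta (a : UnitAddCircle) z - hurwitzZeta (b : UnitAddCircle) z := by
    filter_upwards [(hopen 1).mem_nhds (show (1 : ℝ) < (2 : ℂ).re by simp)] with z hz
    have hsub := (hasSum_hurwitzZeta_of_one_lt_re (Ioc_subset_Icc_self ha) hz).sub
      (hasSum_hurwitzZeta_of_one_lt_re (Ioc_subset_Icc_self hb) hz)
    simpa only [cpow_neg, one_div] using hsub.tsum_eq
  exact (summable_natCast_add_cpow_neg_sub ha hb hs).hasSum_iff.2
    (hseries.eqOn_of_preconnected_of_eventuallyEq hzeta (convex_halfSpace_re_gt 0).isPreconnected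
      (show (0 : ℝ) < (2 : ℂ).re by simp) heq hs)

theorem hurwitzZeta_ofReal_sub_hurwitzZeta_ofReal_ne_zero (ha : 0 < a) (hab : a < b) (hb : b ≤ 1)
    {σ : ℝ} (hσ : 0 < σ) :
    hurwitzZeta (a : UnitAddCircle) σ - hurwitzZeta (b : UnitAddCircle) σ ≠ 0 := by
  have hsum := hasSum_re (hasSum_hurwitzZeta_sub_hurwitzZeta ⟨ha, hab.le.trans hb⟩
    ⟨ha.trans hab, hb⟩ (show 0 < (σ : ℂ).re from hσ))
  have hpos : ∀ n : ℕ, 0 < ((n + a : ℂ) ^ (-(σ : ℂ)) - (n + b : ℂ) ^ (-(σ : ℂ))).re := by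
    intro n
    have hna : (0 : ℝ) < n + a := by positivity
    have hnab : (n + a : ℝ) < n + b := by linarith
    have hterm : (n + a : ℂ) ^ (-(σ : ℂ)) - (n + b : ℂ) ^ (-(σ : ℂ)) =
        (((n + a) ^ (-σ) - (n + b) ^ (-σ) : ℝ) : ℂ) := by
      rw [ofReal_sub, ofReal_cpow hna.le, ofReal_cpow (hna.trans hnab).le]
      push_cast
      rfl
    rw [hterm, ofReal_re, sub_pos]
    exact Real.rpow_lt_rpow_of_neg hna hnab (neg_neg_of_pos hσ)
  intro hzero
  have htsum := hsum.summable.tsum_pos (fun n ↦ (hpos n).le) 0 (hpos 0)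
  rw [hsum.tsum_eq, hzero, zero_re] at htsum
  exact htsum.false

theorem hurwitzZeta_one_half {s : ℂ} (hs : s ≠ 1) :
    hurwitzZeta ((1 / 2 : ℝ) : UnitAddCircle) s = (2 ^ s - 1) * riemannZeta s := by
  have h := DirichletCharacter.LFunctionTrivChar_eq_mul_riemannZeta (N := 2) hs
  have huniv : (Finset.univ : Finset (ZMod 2)) = {0, 1} := by decide
  have hcircle : ZMod.toAddCircle (1 : ZMod 2) = ((1 / 2 : ℝ) : UnitAddCircle) := by
    rw [ZMod.toAddCircle_apply]
    simp [ZMod.val_one]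
  have htwo : (2 : ℂ) ^ s ≠ 0 := by simp
  rw [DirichletCharacter.LFunctionTrivChar, DirichletCharacter.LFunction, ZMod.LFunction, huniv,
    Finset.sum_pair (by decide), hcircle, Nat.prime_two.primeFactors, Finset.prod_singleton] at h
  simp only [MulChar.map_zero, map_one, zero_mul, one_mul, zero_add, Nat.cast_ofNat,
    cpow_neg] at h
  field_simp at h
  exact h

theorem riemannZeta_ofReal_ne_zero {σ : ℝ} (hσ : 0 < σ) : riemannZeta σ ≠ 0 := by
  rcases le_or_gt 1 σ with hσ₁ | hσ₁
  · exact riemannZeta_ne_zero_of_one_le_re hσ₁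
  have h := hurwitzZeta_ofReal_sub_hurwitzZeta_ofReal_ne_zero (a := 1 / 2) (b := 1)
    (by norm_num) (by norm_num) le_rfl hσ
  rw [AddCircle.coe_period, hurwitzZeta_zero,
    hurwitzZeta_one_half (by exact_mod_cast hσ₁.ne), ← sub_one_mul] at h
  exact right_ne_zero_of_mul h

end HurwitzZeta

section DirichletBeta

open Complex ZMod
open scoped Real ZMod

theorem dirichletBeta_ofReal_ne_zero {σ : ℝ} (hσ : 0 < σ) : dirichletBeta σ ≠ 0 :=
  mul_ne_zero (by simp) (hurwitzZeta_ofReal_sub_hurwitzZeta_ofReal_ne_zero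
    (by norm_num) (by norm_num) (by norm_num) hσ)

theorem differentiable_dirichletBeta : Differentiable ℂ dirichletBeta := fun s ↦
  (differentiableAt_id.neg.const_cpow (Or.inl (by norm_num))).mul
    (HurwitzZeta.differentiable_hurwitzZeta_sub_hurwitzZeta _ _ s)

theorem LFunction_one_sub_of_odd {N : ℕ} [NeZero N] {Φ : ZMod N → ℂ} (hΦ : Φ.Odd) {s : ℂ}
    (hs : ∀ n : ℕ, s ≠ -n) :
    LFunction Φ (1 - s) = N ^ (s - 1) * (2 * π) ^ (-s) * Gamma s *
      (2 * I * sin (π * s / 2)) * LFunction (𝓕 Φ) s := by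
  have hΦ₀ : Φ 0 = 0 := by
    have h := hΦ 0
    rw [neg_zero] at h
    exact self_eq_neg.1 h
  have hneg : LFunction (𝓕 fun x ↦ Φ (-x)) s = -LFunction (𝓕 Φ) s := by
    rw [dft_comp_neg]
    simp only [LFunction, dft_odd_iff.2 hΦ _, neg_mul, Finset.sum_neg_distrib, mul_neg]
  rw [LFunction_one_sub Φ hs (Or.inl hΦ₀), hneg, sin,
    show -((π : ℂ) * s / 2) * I = -π * I * s / 2 by ring,
    show (π : ℂ) * s / 2 * I = π * I * s / 2 by ring]
  linear_combination (N ^ (s - 1) * (2 * π : ℂ) ^ (-s) * Gamma s * LFunction (𝓕 Φ) s *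
    (cexp (π * I * s / 2) - cexp (-π * I * s / 2))) * I_mul_I

theorem odd_χ₄ : (fun j ↦ (χ₄ j : ℂ)).Odd := fun j ↦ by
  have h : ∀ j, χ₄ (-j) = -χ₄ j := by decide
  change ((χ₄ (-j) : ℤ) : ℂ) = -(χ₄ j : ℂ)
  rw [h, Int.cast_neg]

theorem sum_χ₄_mul (f : ZMod 4 → ℂ) : ∑ j, (χ₄ j : ℂ) * f j = f 1 - f 3 := by
  have huniv : (Finset.univ : Finset (ZMod 4)) = {0, 1, 2, 3} := by decide
  have h₀ : χ₄ 0 = 0 := by decide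
  have h₁ : χ₄ 1 = 1 := by decide
  have h₂ : χ₄ 2 = 0 := by decide
  have h₃ : χ₄ 3 = -1 := by decide
  rw [huniv, Finset.sum_insert (by decide), Finset.sum_insert (by decide),
    Finset.sum_pair (by decide), h₀, h₁, h₂, h₃]
  push_cast
  ring

theorem dirichletBeta_eq_LFunction (s : ℂ) :
    dirichletBeta s = LFunction (fun j ↦ (χ₄ j : ℂ)) s := by
  have h₁ : toAddCircle (1 : ZMod 4) = ((1 / 4 : ℝ) : UnitAddCircle) := by
    simp [toAddCircle_apply, show (1 : ZMod 4).val = 1 from rfl]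
  have h₃ : toAddCircle (3 : ZMod 4) = ((3 / 4 : ℝ) : UnitAddCircle) := by
    simp [toAddCircle_apply, show (3 : ZMod 4).val = 3 from rfl]
  rw [dirichletBeta, LFunction, sum_χ₄_mul, h₁, h₃, Nat.cast_ofNat]

theorem stdAddChar_four_one : stdAddChar (1 : ZMod 4) = I := by
  have h := stdAddChar_coe (N := 4) 1
  rw [Int.cast_one] at h
  rw [h, show 2 * π * I * ((1 : ℤ) : ℂ) / (4 : ℕ) = π / 2 * I by push_cast; ring,
    exp_pi_div_two_mul_I]

theorem dft_χ₄ : 𝓕 (fun j ↦ (χ₄ j : ℂ)) = fun k ↦ -2 * I * χ₄ k := by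
  have hpow (k : ZMod 4) : stdAddChar k = I ^ k.val := by
    rw [← stdAddChar_four_one, ← AddChar.map_nsmul_eq_pow, nsmul_one, natCast_zmod_val]
  have hval : ∀ k : ZMod 4, (-k).val = 0 ∧ (-(3 * k)).val = 0 ∧ χ₄ k = 0 ∨
      (-k).val = 3 ∧ (-(3 * k)).val = 1 ∧ χ₄ k = 1 ∨
      (-k).val = 2 ∧ (-(3 * k)).val = 2 ∧ χ₄ k = 0 ∨
      (-k).val = 1 ∧ (-(3 * k)).val = 3 ∧ χ₄ k = -1 := by decide
  have hsub (k : ZMod 4) :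
      stdAddChar (-k) - stdAddChar (-(3 * k)) = -2 * I * (χ₄ k : ℂ) := by
    rw [hpow, hpow]
    rcases hval k with ⟨h₁, h₃, h⟩ | ⟨h₁, h₃, h⟩ | ⟨h₁, h₃, h⟩ | ⟨h₁, h₃, h⟩ <;>
      rw [h₁, h₃, h] <;> push_cast
    · ring
    · linear_combination I * I_sq
    · ring
    · linear_combination -I * I_sq
  ext k
  simp only [dft_apply, smul_eq_mul, mul_comm (stdAddChar _), sum_χ₄_mul, one_mul, hsub]

theorem dirichletBeta_one_sub {s : ℂ} (hs : ∀ n : ℕ, s ≠ -n) :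
    dirichletBeta (1 - s) =
      4 ^ s * (2 * π) ^ (-s) * Gamma s * sin (π * s / 2) * dirichletBeta s := by
  have hdft : LFunction (𝓕 fun j ↦ (χ₄ j : ℂ)) s = -2 * I * dirichletBeta s := by
    rw [dft_χ₄, dirichletBeta_eq_LFunction, LFunction, LFunction, Finset.mul_sum, Finset.mul_sum,
      Finset.mul_sum]
    exact Finset.sum_congr rfl fun j _ ↦ by ring
  rw [dirichletBeta_eq_LFunction, LFunction_one_sub_of_odd odd_χ₄ hs, hdft,
    cpow_sub _ _ (by norm_num), cpow_one, Nat.cast_ofNat]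
  linear_combination (4 ^ s * (2 * π : ℂ) ^ (-s) * Gamma s * sin (π * s / 2) * dirichletBeta s) *
    -I_mul_I

theorem riemannZeta_one_sub_mul_dirichletBeta {s : ℂ} (hs : ∀ n : ℕ, s ≠ -n) (hs₁ : s ≠ 1) :
    4 ^ s * sin (π * s / 2) * (riemannZeta (1 - s) * dirichletBeta s) =
      2 * cos (π * s / 2) * (riemannZeta s * dirichletBeta (1 - s)) := by
  rw [riemannZeta_one_sub hs hs₁, dirichletBeta_one_sub hs]
  ring

end DirichletBeta

section Secant

open Finset
open scoped Topology

/-- The real secant function, whose derivatives at `0` are the unsigned Euler numbers. As a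
reciprocal in `ℝ` it takes the value `0` where the cosine vanishes. -/
noncomputable def sec (x : ℝ) : ℝ := (Real.cos x)⁻¹

theorem contDiffAt_sec {x : ℝ} (hx : Real.cos x ≠ 0) {n : WithTop ℕ∞} : ContDiffAt ℝ n sec x :=
  Real.contDiff_cos.contDiffAt.inv hx

theorem deriv_sec {x : ℝ} (hx : Real.cos x ≠ 0) : deriv sec x = sec x * Real.tan x := by
  have h : HasDerivAt sec _ x := (Real.hasDerivAt_cos x).inv hx
  rw [h.deriv, sec, Real.tan_eq_sin_div_cos]
  field_simp

theorem deriv_tan_eq_one_add {x : ℝ} (hx : Real.cos x ≠ 0) :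
    deriv Real.tan x = 1 + Real.tan x * Real.tan x := by
  rw [Real.deriv_tan, ← sq, ← Real.inv_one_add_tan_sq hx, one_div, inv_inv]

theorem iteratedDeriv_mul_nonneg {f g : ℝ → ℝ} {x : ℝ} {n : ℕ} (hf : ContDiffAt ℝ n f x)
    (hg : ContDiffAt ℝ n g x) (hf₀ : ∀ i ≤ n, 0 ≤ iteratedDeriv i f x)
    (hg₀ : ∀ i ≤ n, 0 ≤ iteratedDeriv i g x) :
    0 ≤ iteratedDeriv n (fun y ↦ f y * g y) x := by
  rw [iteratedDeriv_fun_mul hf hg]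
  exact sum_nonneg fun i hi ↦ mul_nonneg (mul_nonneg (Nat.cast_nonneg _)
    (hf₀ i (mem_range_succ_iff.1 hi))) (hg₀ (n - i) (Nat.sub_le n i))

theorem eventually_cos_ne_zero : ∀ᶠ x in 𝓝 0, Real.cos x ≠ 0 :=
  Real.continuous_cos.continuousAt.eventually_ne (by simp)

theorem iteratedDeriv_tan_zero_nonneg (n : ℕ) : 0 ≤ iteratedDeriv n Real.tan 0 := by
  induction n using Nat.strong_induction_on with
  | _ n ih =>
    cases n with
    | zero => simp
    | succ n =>
      have htan : ContDiffAt ℝ n Real.tan 0 := Real.contDiffAt_tan.2 (by simp)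
      have hmul := iteratedDeriv_mul_nonneg htan htan
        (fun i hi ↦ ih i (Nat.lt_succ_of_le hi)) fun i hi ↦ ih i (Nat.lt_succ_of_le hi)
      have hderiv : deriv Real.tan =ᶠ[𝓝 0] fun x ↦ 1 + Real.tan x * Real.tan x :=
        eventually_cos_ne_zero.mono fun _ ↦ deriv_tan_eq_one_add
      rw [iteratedDeriv_succ', hderiv.iteratedDeriv_eq]
      rcases n.eq_zero_or_pos with rfl | hn
      · simp
      · rwa [iteratedDeriv_const_add hn]

theorem iteratedDeriv_sec_zero_nonneg (n : ℕ) : 0 ≤ iteratedDeriv n sec 0 := by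
  induction n using Nat.strong_induction_on with
  | _ n ih =>
    cases n with
    | zero => simp [sec]
    | succ n =>
      have hderiv : deriv sec =ᶠ[𝓝 0] fun x ↦ sec x * Real.tan x :=
        eventually_cos_ne_zero.mono fun _ ↦ deriv_sec
      rw [iteratedDeriv_succ', hderiv.iteratedDeriv_eq]
      exact iteratedDeriv_mul_nonneg (contDiffAt_sec (by simp)) (Real.contDiffAt_tan.2 (by simp))
        (fun i hi ↦ ih i (Nat.lt_succ_of_le hi)) fun i _ ↦ iteratedDeriv_tan_zero_nonneg i

theorem sum_choose_mul_iteratedDeriv_sec_mul_iteratedDeriv_cos {n : ℕ} (hn : n ≠ 0) :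
    ∑ k ∈ range (n + 1),
      n.choose k * iteratedDeriv k sec 0 * iteratedDeriv (n - k) Real.cos 0 = 0 := by
  have hone : (fun x ↦ sec x * Real.cos x) =ᶠ[𝓝 0] fun _ ↦ 1 :=
    eventually_cos_ne_zero.mono fun _ ↦ inv_mul_cancel₀
  rw [← iteratedDeriv_fun_mul (contDiffAt_sec (by simp)) Real.contDiff_cos.contDiffAt,
    hone.iteratedDeriv_eq, iteratedDeriv_const, if_neg hn]

theorem ofReal_iteratedDeriv_cos_zero (n : ℕ) :
    ((iteratedDeriv n Real.cos 0 : ℝ) : ℂ) = Complex.I ^ n * (1 + (-1) ^ n) / 2 := by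
  rcases n.even_or_odd' with ⟨k, rfl | rfl⟩
  · rw [Real.iteratedDeriv_even_cos]
    simp [pow_mul]
    ring
  · rw [Real.iteratedDeriv_odd_cos]
    simp [pow_succ, pow_mul]

theorem eq_eulerNumber_of_sum_eq_zero {K : Type*} [Field K] [CharZero K] {b : ℕ → K}
    (h₀ : b 0 = 1)
    (hsum : ∀ n ≠ 0, ∑ k ∈ range (n + 1), n.choose k * (1 + (-1) ^ (n - k)) * b k = 0) (n : ℕ) :
    b n = eulerNumber n := by
  induction n using Nat.strong_induction_on with
  | _ n ih =>
    cases n with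
    | zero => simp [h₀, eulerNumber]
    | succ n =>
      have hrec := hsum (n + 1) n.succ_ne_zero
      rw [sum_range_succ, sum_congr rfl fun k hk ↦ by rw [ih k (mem_range.1 hk)]] at hrec
      rw [eulerNumber, ← sum_range fun k ↦
        ((n + 1).choose k * (1 + (-1 : ℚ) ^ (n + 1 - k) : ℚ) * eulerNumber k)]
      push_cast
      simp only [Nat.choose_self, Nat.sub_self, pow_zero, Nat.cast_one] at hrec
      linear_combination hrec / 2

theorem ofReal_iteratedDeriv_sec_zero (n : ℕ) :
    ((iteratedDeriv n sec 0 : ℝ) : ℂ) = Complex.I ^ n * (eulerNumber n : ℂ) := by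
  have hI (k : ℕ) : Complex.I ^ k ≠ 0 := pow_ne_zero k Complex.I_ne_zero
  rw [← eq_eulerNumber_of_sum_eq_zero (b := fun k ↦ iteratedDeriv k sec 0 / Complex.I ^ k)
    (by simp [sec]) ?_ n, mul_div_cancel₀ _ (hI n)]
  intro n hn
  have hterm : ∀ k ∈ range (n + 1), n.choose k * (1 + (-1) ^ (n - k)) *
      (iteratedDeriv k sec 0 / Complex.I ^ k) = 2 / Complex.I ^ n *
      ((n.choose k * iteratedDeriv k sec 0 * iteratedDeriv (n - k) Real.cos 0 : ℝ) : ℂ) := by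
    intro k hk
    have hpow := pow_sub_mul_pow Complex.I (mem_range_succ_iff.1 hk)
    push_cast
    rw [ofReal_iteratedDeriv_cos_zero, ← hpow]
    field_simp [hI]
  rw [sum_congr rfl hterm, ← mul_sum, ← Complex.ofReal_sum,
    sum_choose_mul_iteratedDeriv_sec_mul_iteratedDeriv_cos hn, Complex.ofReal_zero, mul_zero]

theorem iteratedDeriv_two_mul_sec_zero (m : ℕ) :
    iteratedDeriv (2 * m) sec 0 = |eulerNumber (2 * m)| := by
  have h : iteratedDeriv (2 * m) sec 0 = (-1) ^ m * (eulerNumber (2 * m) : ℝ) := by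
    have hcomplex := ofReal_iteratedDeriv_sec_zero (2 * m)
    rw [pow_mul, Complex.I_sq] at hcomplex
    exact_mod_cast hcomplex
  rw [← abs_of_nonneg (iteratedDeriv_sec_zero_nonneg (2 * m)), h, abs_mul, abs_neg_one_pow,
    one_mul, Rat.cast_abs]

end Secant

section IteratedDeriv

variable {𝕜 E : Type*} [NontriviallyNormedField 𝕜] [NormedAddCommGroup E] [NormedSpace 𝕜 E]

theorem iteratedDeriv_sub_comp_const_sub_of_odd {n : ℕ} (hn : Odd n) {f : 𝕜 → E} {a c : 𝕜}
    (hc : a - c = c) (hf : ContDiffAt 𝕜 n f c) :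
    iteratedDeriv n (fun x ↦ f x - f (a - x)) c = 2 • iteratedDeriv n f c := by
  have hreflect : ContDiffAt 𝕜 n (fun x ↦ f (a - x)) c :=
    ContDiffAt.comp c (hc.symm ▸ hf) (contDiffAt_const.sub contDiffAt_id)
  rw [iteratedDeriv_fun_sub hf hreflect, iteratedDeriv_comp_const_sub]
  beta_reduce
  rw [hc, hn.neg_one_pow, neg_one_smul, sub_neg_eq_add, two_nsmul]

theorem iteratedDeriv_comp_mul_left (n : ℕ) (f : 𝕜 → E) (c : 𝕜) :
    iteratedDeriv n (fun x ↦ f (c * x)) = fun x ↦ c ^ n • iteratedDeriv n f (c * x) := by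
  induction n with
  | zero => simp
  | succ n ih =>
    funext x
    rw [iteratedDeriv_succ, ih, deriv_fun_const_smul_field, deriv_comp_mul_left,
      ← iteratedDeriv_succ, smul_smul, ← pow_succ]

theorem iteratedDeriv_const_add_mul_comp_mul_sub (n : ℕ) (f : 𝕜 → 𝕜) (a b c : 𝕜) :
    iteratedDeriv n (fun x ↦ a + b * f (b * (x - c))) c =
      (if n = 0 then a else 0) + b ^ (n + 1) * iteratedDeriv n f 0 := by
  have h : iteratedDeriv n (fun x ↦ b * f (b * (x - c))) c = b ^ (n + 1) * iteratedDeriv n f 0 := by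
    rw [iteratedDeriv_const_mul_field, iteratedDeriv_comp_sub_const n fun x ↦ f (b * x),
      iteratedDeriv_comp_mul_left]
    simp only [sub_self, mul_zero, smul_eq_mul]
    ring
  rcases n.eq_zero_or_pos with rfl | hn
  · simp
  · rw [iteratedDeriv_const_add hn, h, if_neg hn.ne', zero_add]

end IteratedDeriv

section LogDifference

open Set
open scoped Real

theorem contDiffAt_log_norm_ofReal {f : ℂ → ℂ} {x : ℝ} (hf : AnalyticAt ℂ f x) (hx : f x ≠ 0)
    {n : WithTop ℕ∞} : ContDiffAt ℝ n (fun y : ℝ ↦ Real.log ‖f y‖) x := by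
  have hfx : ContDiffAt ℝ n (fun y : ℝ ↦ f y) x :=
    ContDiffAt.comp x (hf.contDiffAt.restrict_scalars ℝ) Complex.ofRealCLM.contDiff.contDiffAt
  exact (hfx.norm ℝ hx).log (norm_ne_zero_iff.2 hx)

theorem analyticAt_riemannZeta {s : ℂ} (hs : s ≠ 1) : AnalyticAt ℂ riemannZeta s := by
  have hdiff : DifferentiableOn ℂ riemannZeta {1}ᶜ := fun z hz ↦
    (differentiableAt_riemannZeta hz).differentiableWithinAt
  exact hdiff.analyticAt (isOpen_compl_singleton.mem_nhds hs)

/-- The function `x ↦ log |ζ(x)| - log |β(x)|` of a real variable `x`. -/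
noncomputable def logZetaSubLogBeta (x : ℝ) : ℝ :=
  Real.log ‖riemannZeta x‖ - Real.log ‖dirichletBeta x‖

theorem contDiffAt_logZetaSubLogBeta {x : ℝ} (hx : 0 < x) (hx₁ : x ≠ 1) {n : WithTop ℕ∞} :
    ContDiffAt ℝ n logZetaSubLogBeta x :=
  (contDiffAt_log_norm_ofReal (analyticAt_riemannZeta (by exact_mod_cast hx₁))
    (riemannZeta_ofReal_ne_zero hx)).sub
    (contDiffAt_log_norm_ofReal (differentiable_dirichletBeta.analyticAt x)
      (dirichletBeta_ofReal_ne_zero hx))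

theorem sin_pos_and_cos_pos_of_mem_Ioo {x : ℝ} (hx : x ∈ Ioo 0 1) :
    0 < Real.sin (π * x / 2) ∧ 0 < Real.cos (π * x / 2) := by
  have hpos : 0 < π * x := mul_pos Real.pi_pos hx.1
  have hlt : π * x < π := mul_lt_of_lt_one_right Real.pi_pos hx.2
  exact ⟨Real.sin_pos_of_pos_of_lt_pi (by linarith) (by linarith),
    Real.cos_pos_of_mem_Ioo ⟨by linarith, by linarith⟩⟩

theorem norm_riemannZeta_one_sub_mul_norm_dirichletBeta {x : ℝ} (hx : x ∈ Ioo 0 1) :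
    4 ^ x * Real.sin (π * x / 2) * (‖riemannZeta (1 - x : ℝ)‖ * ‖dirichletBeta x‖) =
      2 * Real.cos (π * x / 2) * (‖riemannZeta x‖ * ‖dirichletBeta (1 - x : ℝ)‖) := by
  obtain ⟨hsin, hcos⟩ := sin_pos_and_cos_pos_of_mem_Ioo hx
  have hne (n : ℕ) : (x : ℂ) ≠ -n := by
    exact_mod_cast (by linarith [hx.1, n.cast_nonneg (α := ℝ)] : x ≠ -n)
  have hfour : ‖(4 : ℂ) ^ (x : ℂ)‖ = 4 ^ x := by
    exact_mod_cast Complex.norm_cpow_eq_rpow_re_of_pos four_pos (x : ℂ)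
  have h := congrArg norm
    (riemannZeta_one_sub_mul_dirichletBeta hne (by exact_mod_cast hx.2.ne))
  have harg : (π * x / 2 : ℂ) = (π * x / 2 : ℝ) := by push_cast; rfl
  rw [harg, ← Complex.ofReal_sin, ← Complex.ofReal_cos] at h
  simpa only [norm_mul, hfour, Complex.norm_real, Real.norm_of_nonneg hsin.le,
    Real.norm_of_nonneg hcos.le, Complex.norm_two, Complex.ofReal_sub, Complex.ofReal_one] using h

theorem logZetaSubLogBeta_sub_one_sub {x : ℝ} (hx : x ∈ Ioo 0 1) :
    logZetaSubLogBeta x - logZetaSubLogBeta (1 - x) =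
      x * Real.log 4 - Real.log 2 + Real.log (Real.tan (π * x / 2)) := by
  obtain ⟨hsin, hcos⟩ := sin_pos_and_cos_pos_of_mem_Ioo hx
  have hx' : 0 < 1 - x := sub_pos.2 hx.2
  have hζ := norm_ne_zero_iff.2 (riemannZeta_ofReal_ne_zero hx.1)
  have hζ' := norm_ne_zero_iff.2 (riemannZeta_ofReal_ne_zero hx')
  have hβ := norm_ne_zero_iff.2 (dirichletBeta_ofReal_ne_zero hx.1)
  have hβ' := norm_ne_zero_iff.2 (dirichletBeta_ofReal_ne_zero hx')
  have h := congrArg Real.log (norm_riemannZeta_one_sub_mul_norm_dirichletBeta hx)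
  rw [Real.log_mul (by positivity) (mul_ne_zero hζ' hβ),
    Real.log_mul (by positivity) (mul_ne_zero hζ hβ'),
    Real.log_mul (by positivity) hsin.ne', Real.log_mul two_ne_zero hcos.ne', Real.log_mul hζ' hβ,
    Real.log_mul hζ hβ', Real.log_rpow (by norm_num)] at h
  rw [Real.tan_eq_sin_div_cos, Real.log_div hsin.ne' hcos.ne', logZetaSubLogBeta,
    logZetaSubLogBeta]
  linarith

theorem hasDerivAt_log_tan {x : ℝ} (hsin : Real.sin x ≠ 0) (hcos : Real.cos x ≠ 0) :
    HasDerivAt (fun y ↦ Real.log (Real.tan y)) (2 / Real.sin (2 * x)) x := by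
  have htan : Real.tan x ≠ 0 := by
    rw [Real.tan_eq_sin_div_cos]
    exact div_ne_zero hsin hcos
  convert (Real.hasDerivAt_tan hcos).log htan using 1
  rw [Real.tan_eq_sin_div_cos, Real.sin_two_mul]
  field_simp

theorem hasDerivAt_mul_log_four_sub_log_two_add_log_tan {x : ℝ} (hx : x ∈ Ioo 0 1) :
    HasDerivAt (fun y ↦ y * Real.log 4 - Real.log 2 + Real.log (Real.tan (π * y / 2)))
      (Real.log 4 + π * sec (π * (x - 1 / 2))) x := by
  obtain ⟨hsin, hcos⟩ := sin_pos_and_cos_pos_of_mem_Ioo hx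
  have hlin : HasDerivAt (fun y : ℝ ↦ π * y / 2) (π / 2) x := by
    simpa using ((hasDerivAt_id x).const_mul π).div_const 2
  have hlog : HasDerivAt (fun y ↦ y * Real.log 4 - Real.log 2) (Real.log 4) x := by
    simpa using ((hasDerivAt_id x).mul_const (Real.log 4)).sub_const (Real.log 2)
  refine (hlog.add ((hasDerivAt_log_tan hsin.ne' hcos.ne').comp x hlin)).congr_deriv ?_
  rw [sec, show π * (x - 1 / 2) = 2 * (π * x / 2) - π / 2 by ring, Real.cos_sub_pi_div_two]
  ring

end LogDifference

/-- for every `m ≥ 0`,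
`(d^{2m+1}/ds^{2m+1})[log|ζ(s)| - log β(s)]` at `s = 1/2` equals
`½ π^{2m+1} |E_{2m}| + δ_{m,0} log 2`. -/
theorem log_zeta_minus_log_beta_odd_deriv (m : ℕ) :
    iteratedDeriv (2 * m + 1)
        (fun x : ℝ => Real.log ‖riemannZeta (x : ℂ)‖ - Real.log ‖dirichletBeta (x : ℂ)‖)
        (1 / 2) =
      (1 / 2) * Real.pi ^ (2 * m + 1) * ((|eulerNumber (2 * m)| : ℚ) : ℝ)
        + (if m = 0 then Real.log 2 else 0) := by
  change iteratedDeriv (2 * m + 1) logZetaSubLogBeta (1 / 2) = _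
  have hmem : Set.Ioo (0 : ℝ) 1 ∈ nhds (1 / 2) := Ioo_mem_nhds (by norm_num) (by norm_num)
  have hreflect := Filter.eventually_of_mem hmem fun _ ↦ logZetaSubLogBeta_sub_one_sub
  have hderiv := Filter.eventually_of_mem hmem fun _ hx ↦
    (hasDerivAt_mul_log_four_sub_log_two_add_log_tan hx).deriv
  have hdouble := iteratedDeriv_sub_comp_const_sub_of_odd (odd_two_mul_add_one m)
    (show (1 : ℝ) - 1 / 2 = 1 / 2 by norm_num)
    (contDiffAt_logZetaSubLogBeta (by norm_num) (by norm_num))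
  rw [Filter.EventuallyEq.iteratedDeriv_eq _ hreflect, iteratedDeriv_succ',
    Filter.EventuallyEq.iteratedDeriv_eq _ hderiv, iteratedDeriv_const_add_mul_comp_mul_sub,
    iteratedDeriv_two_mul_sec_zero, two_nsmul] at hdouble
  have hlog : Real.log 4 = 2 * Real.log 2 := by
    rw [show (4 : ℝ) = 2 ^ 2 by norm_num, Real.log_pow, Nat.cast_ofNat]
  rcases eq_or_ne m 0 with rfl | hm
  · simp only [if_true, mul_zero] at hdouble ⊢
    linarith
  · rw [if_neg hm]
    rw [if_neg (by omega)] at hdouble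
    linarith
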